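/- arXiv:2210.10199 — 3 statements merged into one kernel-verified Lean document; each statement's English description precedes it below -/
import Mathlib

section
/- (Lemma: general consistent maximizers.) Let 𝒳 and Θ be compact topological spaces, 𝒵 a finite nonempty type, α : 𝒳 × 𝒵 → ℝ continuous in x for every z ∈ 𝒵, and p : Θ → (𝒵 → ℝ) continuous with each p(θ) a probability weight vector on 𝒵. Assume p is surjective onto the probability weight vectors: for every probability weight vector q on 𝒵 there exists θ ∈ Θ with p(θ) = q. Define α̂(x, θ) = Σ_{z ∈ 𝒵} p(θ)(z) · α(x, z). If (x*, θ*) maximizes α̂ over 𝒳 × Θ, then for every z ∈ 𝒵 with p(θ*)(z) > 0, the pair (x*, z) maximizes α over 𝒳 × 𝒵. -/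
/-- Lemma (general consistent maximizers): if `(x*, θ*)` maximizes the probabilistic objective
`α̂(x, θ) = ∑ z, p θ z * α x z` over `𝒳 × Θ`, then for every `z` with `p θ* z > 0`,
the pair `(x*, z)` maximizes `α` over `𝒳 × 𝒵`. -/
theorem stmt_3 {X Θ Z : Type*} [TopologicalSpace X] [CompactSpace X]
    [TopologicalSpace Θ] [CompactSpace Θ] [Fintype Z] [Nonempty Z]
    (α : X → Z → ℝ) (hα : ∀ z, Continuous fun x => α x z)
    (p : Θ → Z → ℝ) (hp : ∀ z, Continuous fun θ => p θ z)
    (hp0 : ∀ θ z, 0 ≤ p θ z) (hp1 : ∀ θ, ∑ z, p θ z = 1)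
    (hsurj : ∀ q : Z → ℝ, (∀ z, 0 ≤ q z) → ∑ z, q z = 1 → ∃ θ, p θ = q)
    (xstar : X) (θstar : Θ)
    (hmax : ∀ x θ, ∑ z, p θ z * α x z ≤ ∑ z, p θstar z * α xstar z) :
    ∀ z, 0 < p θstar z → ∀ x' z', α x' z' ≤ α xstar z := by
  classical
  intro z hz x' z'
  set M := ∑ z, p θstar z * α xstar z with hM
  have key : ∀ x w, α x w ≤ M := by
    intro x w
    obtain ⟨θ, hθ⟩ := hsurj (fun v => if v = w then 1 else 0)
      (fun v => by split_ifs <;> norm_num) (by simp)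
    have h := hmax x θ
    rw [hθ] at h
    simpa using h
  have hsum : ∑ w, p θstar w * (M - α xstar w) = 0 := by
    simp only [mul_sub, Finset.sum_sub_distrib, ← Finset.sum_mul, hp1]
    rw [← hM]
    ring
  have h0 := (Finset.sum_eq_zero_iff_of_nonneg (fun w _ =>
    mul_nonneg (hp0 θstar w) (sub_nonneg.2 (key xstar w)))).1 hsum z (Finset.mem_univ z)
  rcases mul_eq_zero.1 h0 with h | h
  · exact absurd h hz.ne'
  · have := key x' z'
    linarith
end

section
/- (Corollary: unique optimizer.) Let 𝒳 and Θ be compact topological spaces, 𝒵 a finite nonempty type, α : 𝒳 × 𝒵 → ℝ continuous in x for every z ∈ 𝒵, and p : Θ → (𝒵 → ℝ) continuous with each p(θ) a probability weight vector on 𝒵 and p surjective onto the probability weight vectors. Suppose α has a unique maximizer (x*, z*) over 𝒳 × 𝒵. Then every maximizer (x, θ) of the probabilistic objective α̂(x, θ) = Σ_z p(θ)(z) α(x, z) over 𝒳 × Θ satisfies x = x* and p(θ) is the point mass at z*, i.e. p(θ)(z*) = 1 and p(θ)(z) = 0 for z ≠ z*. -/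
/-- Corollary (unique optimizer): if `α` has a unique maximizer `(x*, z*)`, then every maximizer
`(x, θ)` of the probabilistic objective satisfies `x = x*` and `p θ` is the point mass at `z*`. -/
theorem stmt_4 {X Θ Z : Type*} [TopologicalSpace X] [CompactSpace X]
    [TopologicalSpace Θ] [CompactSpace Θ] [Fintype Z] [Nonempty Z]
    (α : X → Z → ℝ) (hα : ∀ z, Continuous fun x => α x z)
    (p : Θ → Z → ℝ) (hp : ∀ z, Continuous fun θ => p θ z)
    (hp0 : ∀ θ z, 0 ≤ p θ z) (hp1 : ∀ θ, ∑ z, p θ z = 1)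
    (hsurj : ∀ q : Z → ℝ, (∀ z, 0 ≤ q z) → ∑ z, q z = 1 → ∃ θ, p θ = q)
    (xstar : X) (zstar : Z)
    (hmax : ∀ x z, α x z ≤ α xstar zstar)
    (huniq : ∀ x z, (∀ x' z', α x' z' ≤ α x z) → x = xstar ∧ z = zstar) :
    ∀ x θ, (∀ x' θ', ∑ z, p θ' z * α x' z ≤ ∑ z, p θ z * α x z) →
      x = xstar ∧ p θ zstar = 1 ∧ ∀ z, z ≠ zstar → p θ z = 0 := by
  classical
  intro x θ h
  obtain ⟨θ0, h0⟩ := hsurj (fun z => if z = zstar then 1 else 0)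
    (fun z => by split_ifs <;> norm_num) (by simp)
  have h1 := h xstar θ0
  simp only [h0, ite_mul, one_mul, zero_mul, Finset.sum_ite_eq', Finset.sum_ite_eq,
    Finset.mem_univ, if_true] at h1
  have hnn : ∀ z ∈ Finset.univ, 0 ≤ p θ z * (α xstar zstar - α x z) := fun z _ =>
    mul_nonneg (hp0 θ z) (sub_nonneg.2 (hmax x z))
  have hs : ∑ z, p θ z * (α xstar zstar - α x z) = 0 := by
    refine le_antisymm ?_ (Finset.sum_nonneg hnn)
    simp only [mul_sub, Finset.sum_sub_distrib, ← Finset.sum_mul, hp1, one_mul]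
    linarith
  have hz := (Finset.sum_eq_zero_iff_of_nonneg hnn).1 hs
  have key : ∀ z, p θ z ≠ 0 → x = xstar ∧ z = zstar := by
    intro z hpz
    have h2 := (mul_eq_zero.1 (hz z (Finset.mem_univ z))).resolve_left hpz
    refine huniq x z fun x' z' => ?_
    linarith [hmax x' z']
  have hzero : ∀ z, z ≠ zstar → p θ z = 0 := fun z hne => by
    by_contra hc
    exact hne (key z hc).2
  have hone : p θ zstar = 1 := by
    rw [← hp1 θ]
    exact (Finset.sum_eq_single zstar (fun z _ hne => hzero z hne) (by simp)).symm
  exact ⟨(key zstar (by rw [hone]; norm_num)).1, hone, hzero⟩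
end

section
/- (Theorem 1: consistent maximizers.) Let 𝒳 and Θ be compact topological spaces, 𝒵 a finite nonempty type, α : 𝒳 × 𝒵 → ℝ continuous in x for every z ∈ 𝒵, and p : Θ → (𝒵 → ℝ) continuous with each p(θ) a probability weight vector on 𝒵 and p surjective onto the probability weight vectors. Let ℋ* = {(x, z) ∈ 𝒳 × 𝒵 : α(x, z) = max_{(x', z')} α(x', z')} be the set of maximizers of α, let 𝒥* ⊆ 𝒳 × Θ be the set of maximizers of the probabilistic objective α̂(x, θ) = Σ_z p(θ)(z) α(x, z), and define Ĥ* = {(x, z) : ∃ θ, (x, θ) ∈ 𝒥* and p(θ)(z) > 0}. Then Ĥ* = ℋ*. -/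
/-- Theorem 1 (consistent maximizers): the set `Ĥ*` of pairs `(x, z)` such that `(x, θ)`
maximizes the probabilistic objective for some `θ` and `z` lies in the support of `p θ`
equals the set `ℋ*` of maximizers of the acquisition function `α`. -/
theorem stmt_10 {X Θ Z : Type*} [TopologicalSpace X] [CompactSpace X]
    [TopologicalSpace Θ] [CompactSpace Θ] [Fintype Z] [Nonempty Z]
    (α : X → Z → ℝ) (hα : ∀ z, Continuous fun x => α x z)
    (p : Θ → Z → ℝ) (hp : ∀ z, Continuous fun θ => p θ z)
    (hp0 : ∀ θ z, 0 ≤ p θ z) (hp1 : ∀ θ, ∑ z, p θ z = 1)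
    (hsurj : ∀ q : Z → ℝ, (∀ z, 0 ≤ q z) → ∑ z, q z = 1 → ∃ θ, p θ = q) :
    {xz : X × Z | ∃ θ : Θ,
        (∀ x' : X, ∀ θ' : Θ, ∑ z, p θ' z * α x' z ≤ ∑ z, p θ z * α xz.1 z) ∧
        0 < p θ xz.2} =
      {xz : X × Z | ∀ x' : X, ∀ z' : Z, α x' z' ≤ α xz.1 xz.2} := by
  classical
  have hd : ∀ z₀ : Z, ∃ θ, ∀ x, ∑ z, p θ z * α x z = α x z₀ ∧ p θ z₀ = 1 := by
    intro z₀
    obtain ⟨θ, hθ⟩ := hsurj (fun z => if z = z₀ then 1 else 0)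
      (fun z => by split_ifs <;> norm_num) (by simp)
    exact ⟨θ, fun x => by simp [hθ]⟩
  ext ⟨x, z⟩
  simp only [Set.mem_setOf_eq]
  constructor
  · rintro ⟨θ, hmax, hpos⟩
    have hle : ∀ x' z', α x' z' ≤ ∑ w, p θ w * α x w := by
      intro x' z'
      obtain ⟨θ', h'⟩ := hd z'
      rw [← (h' x').1]
      exact hmax x' θ'
    generalize hS : ∑ w, p θ w * α x w = S at hle
    have hsum : ∑ w, p θ w * (S - α x w) = 0 := by
      simp only [mul_sub, Finset.sum_sub_distrib, ← Finset.sum_mul, hp1, hS]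
      ring
    have h0 := (Finset.sum_eq_zero_iff_of_nonneg (fun w _ =>
      mul_nonneg (hp0 θ w) (sub_nonneg.mpr (hle x w)))).mp hsum z (Finset.mem_univ z)
    have h1 : S - α x z = 0 := (mul_eq_zero.mp h0).resolve_left hpos.ne'
    intro x' z'
    linarith [hle x' z']
  · intro h
    obtain ⟨θ, hθ⟩ := hd z
    refine ⟨θ, fun x' θ' => ?_, by rw [(hθ x).2]; exact one_pos⟩
    rw [(hθ x).1]
    calc ∑ w, p θ' w * α x' w ≤ ∑ w, p θ' w * α x z :=
          Finset.sum_le_sum fun w _ => mul_le_mul_of_nonneg_left (h x' w) (hp0 θ' w)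
      _ = α x z := by rw [← Finset.sum_mul, hp1, one_mul]
end
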